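/- Define p_k = ∫_0^{1/e} (c^{k-1} k^k / k!) · e^{−T(c)+c} dc for k ≥ 2, the limiting probability that the min mean-weight cycle in the directed complete graph has length k. Then Σ_{k≥2} p_k = 1 − e^{−1+1/e}. -/

import Mathlib

open Real

/-- The tree function `T(z) = Σ_{k≥1} k^{k-1} z^k / k!`. -/
noncomputable def treeFun (z : ℝ) : ℝ :=
  ∑' k : ℕ, ((k + 1 : ℕ) : ℝ) ^ k * z ^ (k + 1) / ((k + 1).factorial : ℝ)

/-- The limiting probability that the min mean-weight cycle in the directed complete
graph has length `k`. -/
noncomputable def pLen (k : ℕ) : ℝ :=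
  ∫ c in (0 : ℝ)..(1 / Real.exp 1),
    c ^ (k - 1) * (k : ℝ) ^ k / (k.factorial : ℝ) * Real.exp (-treeFun c + c)

noncomputable def tco (k : ℕ) : ℝ := ((k + 1 : ℕ) : ℝ) ^ k / ((k + 1).factorial : ℝ)

lemma tco_nonneg (k : ℕ) : 0 ≤ tco k := by unfold tco; positivity

lemma dco_le (k : ℕ) : ((k : ℝ) + 1) * tco k ≤ exp 1 ^ (k + 1) := by
  have h := Real.pow_div_factorial_le_exp ((k + 1 : ℕ) : ℝ) (by positivity) (k + 1)
  rw [← Real.exp_nat_mul, mul_one]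
  refine le_trans (le_of_eq ?_) h
  unfold tco
  push_cast
  ring

lemma tco_le (k : ℕ) : tco k ≤ exp 1 ^ (k + 1) := by
  refine le_trans ?_ (dco_le k)
  have := tco_nonneg k
  have : (0 : ℝ) ≤ k := by positivity
  nlinarith

lemma treeFun_eq (z : ℝ) : treeFun z = ∑' k : ℕ, tco k * z ^ (k + 1) := by
  unfold treeFun tco
  refine tsum_congr fun k => ?_
  ring

lemma lt_inv_e {z : ℝ} (hz : |z| < 1 / exp 1) : exp 1 * |z| < 1 := by
  have := exp_pos 1
  rw [lt_div_iff₀ this] at hz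
  linarith

lemma summable_geo {z : ℝ} (hz : |z| < 1 / exp 1) :
    Summable fun k : ℕ => exp 1 ^ (k + 1) * |z| ^ k := by
  have h := (summable_geometric_of_lt_one (by positivity) (lt_inv_e hz)).mul_left (exp 1)
  refine h.congr fun k => ?_
  rw [mul_pow]; ring

lemma summable_d {z : ℝ} (hz : |z| < 1 / exp 1) :
    Summable fun k : ℕ => ((k : ℝ) + 1) * tco k * z ^ k := by
  refine Summable.of_norm_bounded (summable_geo hz) fun k => ?_
  have h0 : 0 ≤ ((k : ℝ) + 1) * tco k := mul_nonneg (by positivity) (tco_nonneg k)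
  rw [norm_mul, norm_pow, Real.norm_eq_abs, Real.norm_eq_abs, abs_of_nonneg h0]
  gcongr
  exact dco_le k

lemma summable_c {z : ℝ} (hz : |z| < 1 / exp 1) :
    Summable fun k : ℕ => tco k * z ^ k := by
  refine Summable.of_norm_bounded (summable_geo hz) fun k => ?_
  rw [norm_mul, norm_pow, Real.norm_eq_abs, Real.norm_eq_abs, abs_of_nonneg (tco_nonneg k)]
  gcongr
  exact tco_le k

lemma summable_t {z : ℝ} (hz : |z| < 1 / exp 1) :
    Summable fun k : ℕ => tco k * z ^ (k + 1) := by
  refine ((summable_c hz).mul_left z).congr fun k => ?_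
  ring

lemma treeFun_hasDerivAt {z : ℝ} (hz : |z| < 1 / exp 1) :
    HasDerivAt treeFun (∑' k : ℕ, ((k : ℝ) + 1) * tco k * z ^ k) z := by
  obtain ⟨r, hzr, hr⟩ := exists_between hz
  have hr0 : 0 < r := lt_of_le_of_lt (abs_nonneg z) hzr
  have hr' : |r| < 1 / exp 1 := by rwa [abs_of_pos hr0]
  have e : treeFun = fun z => ∑' k : ℕ, tco k * z ^ (k + 1) := funext treeFun_eq
  rw [e]
  refine hasDerivAt_tsum_of_isPreconnected (g := fun (k : ℕ) (z : ℝ) => tco k * z ^ (k + 1))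
    (g' := fun (k : ℕ) (z : ℝ) => ((k : ℝ) + 1) * tco k * z ^ k) (t := Metric.ball (0 : ℝ) r) (y₀ := (0 : ℝ))
    (summable_geo hr') Metric.isOpen_ball (convex_ball _ _).isPreconnected ?_ ?_
    (by simpa using hr0) ?_ (by simpa using hzr)
  · intro n y _
    have := (hasDerivAt_pow (n + 1) y).const_mul (tco n)
    convert! this using 1
    push_cast
    ring
  · intro k y hy
    have hy' : |y| < r := by simpa using hy
    have h0 : 0 ≤ ((k : ℝ) + 1) * tco k := mul_nonneg (by positivity) (tco_nonneg k)
    rw [norm_mul, norm_pow, Real.norm_eq_abs, Real.norm_eq_abs, abs_of_nonneg h0, abs_of_pos hr0]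
    gcongr
    exact dco_le k
  · exact summable_t (by simp; positivity)

lemma treeFun_analyticAt {z : ℝ} (hz : |z| < 1 / exp 1) : AnalyticAt ℝ treeFun z := by
  have hG : AnalyticAt ℝ (fun z : ℝ => ∑' k : ℕ, tco k * z ^ k) z := by
    have hrad : ENNReal.ofReal (1 / exp 1) ≤
        (FormalMultilinearSeries.ofScalars ℝ tco).radius := by
      refine FormalMultilinearSeries.le_radius_of_bound _ (r := (1 / exp 1).toNNReal) (exp 1) fun n => ?_
      rw [FormalMultilinearSeries.ofScalars_norm, Real.norm_eq_abs, abs_of_nonneg (tco_nonneg n),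
        Real.coe_toNNReal _ (by positivity)]
      calc tco n * (1 / exp 1) ^ n ≤ exp 1 ^ (n + 1) * (1 / exp 1) ^ n := by
            gcongr; exact tco_le n
        _ = exp 1 := by rw [pow_succ, mul_right_comm, ← mul_pow]; simp
    have hpos : 0 < (FormalMultilinearSeries.ofScalars ℝ tco).radius :=
      lt_of_lt_of_le (by simp; positivity) hrad
    have := (FormalMultilinearSeries.hasFPowerSeriesOnBall _ hpos).analyticAt_of_mem (y := z) (by
      simp only [Metric.mem_eball, edist_zero_right]
      refine lt_of_lt_of_le ?_ hrad
      rw [← ofReal_norm]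
      exact (ENNReal.ofReal_lt_ofReal_iff (by positivity)).2 hz)
    convert! this using 1
    ext y
    have := FormalMultilinearSeries.ofScalars_sum_eq (E := ℝ) tco y
    simpa [FormalMultilinearSeries.ofScalarsSum] using this.symm
  have e : treeFun = fun z => z * ∑' k : ℕ, tco k * z ^ k := by
    ext y
    rw [treeFun_eq, ← tsum_mul_left]
    refine tsum_congr fun k => ?_
    ring
  rw [e]
  exact analyticAt_id.mul hG

lemma diff_sum (n : ℕ) (hn : 1 ≤ n) :
    ∑ k ∈ Finset.range (n + 1), (-1 : ℝ) ^ (n - k) * ((k + 1 : ℕ) : ℝ) ^ n *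
      ((n + 1).choose (k + 1) : ℝ) = 0 := by
  have h := fwdDiff_iter_eq_sum_shift (1 : ℝ) (fun x : ℝ => x ^ n) (n + 1) 0
  rw [fwdDiff_iter_pow_eq_zero_of_lt (by omega)] at h
  rw [Finset.sum_range_succ'] at h
  simp [show n ≠ 0 by omega] at h
  refine Eq.trans (Finset.sum_congr rfl fun k _ => ?_) h.symm
  push_cast
  ring

lemma exp_hasSum (x : ℝ) : HasSum (fun m : ℕ => x ^ m / (m.factorial : ℝ)) (exp x) := by
  rw [Real.exp_eq_exp_ℝ]
  exact NormedSpace.expSeries_div_hasSum_exp x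

lemma treeFun_small {w : ℝ} (h0 : 0 < w) (hw : w * exp w < 1 / exp 1) :
    treeFun (w * exp (-w)) = w := by
  let f : ℕ × ℕ → ℝ := fun p =>
    tco p.1 * w ^ (p.1 + 1) * ((-((p.1 + 1 : ℕ) : ℝ) * w) ^ p.2 / (p.2.factorial : ℝ))
  have hrow : ∀ k : ℕ, HasSum (fun m => f (k, m)) (tco k * (w * exp (-w)) ^ (k + 1)) := by
    intro k
    have := (exp_hasSum (-((k + 1 : ℕ) : ℝ) * w)).mul_left (tco k * w ^ (k + 1))
    convert! this using 1
    rw [mul_pow, ← Real.exp_nat_mul]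
    ring_nf
  have hrowabs : ∀ k : ℕ, HasSum (fun m => ‖f (k, m)‖) (tco k * (w * exp w) ^ (k + 1)) := by
    intro k
    have := (exp_hasSum (((k + 1 : ℕ) : ℝ) * w)).mul_left (tco k * w ^ (k + 1))
    convert! this using 1
    · ext m
      simp only [f]
      rw [norm_mul, norm_div, norm_pow, norm_mul, norm_mul, norm_neg, norm_pow]
      simp [abs_of_pos h0, abs_of_nonneg (tco_nonneg k)]
      left
      rw [abs_of_nonneg (by positivity)]
    · rw [mul_pow, ← Real.exp_nat_mul]
      ring_nf
  have hsum : Summable f := by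
    refine Summable.of_norm ?_
    refine (summable_prod_of_nonneg fun _ => norm_nonneg _).2 ⟨fun k => (hrowabs k).summable, ?_⟩
    simp_rw [fun k => (hrowabs k).tsum_eq]
    exact summable_t (by rwa [abs_of_pos (by positivity)])
  have h1 : ∑' p, f p = treeFun (w * exp (-w)) := by
    rw [hsum.tsum_prod, treeFun_eq]
    exact tsum_congr fun k => (hrow k).tsum_eq
  rw [← h1, ← Finset.HasAntidiagonal.sigmaAntidiagonalEquivProd.tsum_eq f]
  refine ((Finset.HasAntidiagonal.sigmaAntidiagonalEquivProd.summable_iff.2 hsum).tsum_sigma'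
    (fun n => (hasSum_fintype _).summable)).trans ?_
  simp only [Function.comp_apply]
  have hn : ∀ n, ∑' c : Finset.HasAntidiagonal.antidiagonal n,
      f (Finset.HasAntidiagonal.sigmaAntidiagonalEquivProd ⟨n, c⟩) = if n = 0 then w else 0 := by
    intro n
    rw [tsum_fintype]
    have : ∑ c : Finset.HasAntidiagonal.antidiagonal n,
      f (Finset.HasAntidiagonal.sigmaAntidiagonalEquivProd ⟨n, c⟩)
        = ∑ c ∈ Finset.HasAntidiagonal.antidiagonal n, f c := Finset.sum_coe_sort (Finset.HasAntidiagonal.antidiagonal n) f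
    rw [this, Finset.Nat.sum_antidiagonal_eq_sum_range_succ_mk]
    rcases Nat.eq_zero_or_pos n with rfl | hpos
    · simp [f, tco]
    · rw [if_neg (by omega)]
      have hd := diff_sum n hpos
      have : ∀ k ∈ Finset.range (n + 1), f (k, n - k) = w ^ (n + 1) / ((n + 1).factorial : ℝ) *
        ((-1 : ℝ) ^ (n - k) * ((k + 1 : ℕ) : ℝ) ^ n * ((n + 1).choose (k + 1) : ℝ)) := by
        intro k hk
        have hk : k ≤ n := by simpa [Nat.lt_succ_iff] using hk
        obtain ⟨m, rfl⟩ := Nat.exists_eq_add_of_le hk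
        have hc : (((k + m + 1).choose (k + 1) : ℕ) : ℝ) =
            ((k + m + 1).factorial : ℝ) / (((k + 1).factorial : ℝ) * (m.factorial : ℝ)) := by
          rw [Nat.cast_choose ℝ (by omega)]
          congr 4
          omega
        rw [hc]
        simp only [f, tco, Nat.add_sub_cancel_left]
        have e1 : ((k + m + 1).factorial : ℝ) ≠ 0 := by positivity
        rw [mul_pow, neg_pow]
        field_simp
        ring
      rw [Finset.sum_congr rfl this, ← Finset.mul_sum, hd, mul_zero]
  rw [tsum_congr hn, tsum_ite_eq]

lemma arg_lt {w : ℝ} (h1 : w < 1) : w * exp (-w) < 1 / exp 1 := by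
  have h := Real.add_one_lt_exp (x := w - 1) (by linarith)
  rw [Real.exp_sub] at h
  rw [Real.exp_neg, ← div_eq_mul_inv, div_lt_iff₀ (exp_pos _)]
  calc w = w - 1 + 1 := by ring
    _ < _ := h
    _ = _ := by ring

lemma treeFun_inv {w : ℝ} (h0 : 0 < w) (h1 : w < 1) : treeFun (w * exp (-w)) = w := by
  have hf : AnalyticOnNhd ℝ (fun w => treeFun (w * exp (-w))) (Set.Ioo 0 1) := by
    intro x hx
    have hx0 := hx.1
    refine AnalyticAt.fun_comp (g := treeFun) (f := fun w : ℝ => w * exp (-w)) (treeFun_analyticAt ?_) ?_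
    · rw [abs_of_pos (by positivity)]
      exact arg_lt hx.2
    · fun_prop
  refine hf.eqOn_of_preconnected_of_eventuallyEq (g := fun w => w) (fun x _ => analyticAt_id)
    isPreconnected_Ioo (z₀ := 1 / 16) (by constructor <;> norm_num) ?_ ⟨h0, h1⟩
  filter_upwards [Ioo_mem_nhds (a := (0 : ℝ)) (b := 1 / 8) (by norm_num) (by norm_num)] with x hx
  refine treeFun_small hx.1 ?_
  have he := Real.exp_one_lt_d9
  have h2 : exp x ≤ exp 1 := exp_le_exp.2 (by linarith [hx.2])
  rw [lt_div_iff₀ (exp_pos 1)]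
  have := exp_pos x
  have hx0 := hx.1
  have hx8 := hx.2
  have h3 : exp x * exp 1 < 8 := by nlinarith [exp_pos 1]
  nlinarith

lemma tendsto_arg : Filter.Tendsto (fun w : ℝ => w * exp (-w)) (nhdsWithin 1 (Set.Iio 1))
    (nhds (1 / exp 1)) := by
  have : Continuous fun w : ℝ => w * exp (-w) := by fun_prop
  have h := (this.tendsto 1).mono_left (nhdsWithin_le_nhds (s := Set.Iio 1))
  simpa [Real.exp_neg] using h

lemma ev_Ioo : ∀ᶠ w : ℝ in nhdsWithin 1 (Set.Iio 1), w ∈ Set.Ioo (0 : ℝ) 1 :=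
  Ioo_mem_nhdsLT (by norm_num)

lemma summable_end : Summable fun k : ℕ => tco k * (1 / exp 1) ^ (k + 1) := by
  refine summable_of_sum_le (c := 1) (fun k => mul_nonneg (tco_nonneg k) (by positivity)) fun s => ?_
  have hc : Continuous fun z : ℝ => ∑ k ∈ s, tco k * z ^ (k + 1) := by fun_prop
  refine le_of_tendsto ((hc.tendsto _).comp tendsto_arg) ?_
  filter_upwards [ev_Ioo] with w hw
  have hw0 := hw.1
  have hpos : 0 < w * exp (-w) := by positivity
  refine le_trans ?_ ((treeFun_inv hw.1 hw.2).le.trans hw.2.le)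
  rw [treeFun_eq]
  refine (summable_t ?_).sum_le_tsum s fun k _ => mul_nonneg (tco_nonneg k) (by positivity)
  rw [abs_of_pos hpos]
  exact arg_lt hw.2

lemma treeFun_cont : ContinuousOn treeFun (Set.Icc 0 (1 / exp 1)) := by
  have e : treeFun = fun z => ∑' k : ℕ, tco k * z ^ (k + 1) := funext treeFun_eq
  rw [e]
  refine continuousOn_tsum (fun k => by fun_prop) summable_end fun k x hx => ?_
  have := hx.1
  rw [Real.norm_eq_abs, abs_of_nonneg (mul_nonneg (tco_nonneg k) (by positivity))]
  have := tco_nonneg k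
  gcongr
  exact hx.2

lemma treeFun_end : treeFun (1 / exp 1) = 1 := by
  have h1 : Filter.Tendsto (fun w : ℝ => treeFun (w * exp (-w))) (nhdsWithin 1 (Set.Iio 1))
      (nhds (treeFun (1 / exp 1))) := by
    have hc := treeFun_cont (1 / exp 1) ⟨by positivity, le_rfl⟩
    refine Filter.Tendsto.comp hc (tendsto_nhdsWithin_iff.2 ⟨tendsto_arg, ?_⟩)
    filter_upwards [ev_Ioo] with w hw
    have hw0 := hw.1
    exact ⟨by positivity, (arg_lt hw.2).le⟩
  have h2 : Filter.Tendsto (fun w : ℝ => treeFun (w * exp (-w))) (nhdsWithin 1 (Set.Iio 1))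
      (nhds 1) := by
    refine (Filter.tendsto_id.mono_left nhdsWithin_le_nhds).congr' ?_
    filter_upwards [ev_Ioo] with w hw
    exact (treeFun_inv hw.1 hw.2).symm
  exact tendsto_nhds_unique h1 h2

lemma treeFun_zero : treeFun 0 = 0 := by
  rw [treeFun_eq]; simp

/-- `Σ_{k≥2} p_k = 1 − e^{−1+1/e}`. -/
theorem sum_pLen : ∑' k : ℕ, pLen (k + 2) = 1 - Real.exp (-1 + 1 / Real.exp 1) := by
  have hb : (0 : ℝ) < 1 / exp 1 := by positivity
  let F : ℕ → ℝ → ℝ := fun k c =>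
    c ^ (k + 2 - 1) * ((k + 2 : ℕ) : ℝ) ^ (k + 2) / ((k + 2).factorial : ℝ) *
      Real.exp (-treeFun c + c)
  let g : ℝ → ℝ := fun c => -Real.exp (-treeFun c + c)
  have hFnn : ∀ k c, 0 ≤ c → 0 ≤ F k c := by
    intro k c hc
    simp only [F]; positivity
  have hS : ∀ c ∈ Set.Ioo 0 (1 / exp 1), HasSum (fun k => F k c)
      (((∑' k : ℕ, ((k : ℝ) + 1) * tco k * c ^ k) - 1) * exp (-treeFun c + c)) := by
    intro c hc
    have hc' : |c| < 1 / exp 1 := by rw [abs_of_pos hc.1]; exact hc.2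
    have h := (hasSum_nat_add_iff' 1).2 (summable_d hc').hasSum
    have h2 := h.mul_right (exp (-treeFun c + c))
    convert! h2 using 1
    · ext k
      simp only [F, tco]
      rw [show k + 2 - 1 = k + 1 by omega]
      push_cast
      ring
    · simp [tco]
  have hder : ∀ c ∈ Set.Ioo 0 (1 / exp 1), HasDerivAt g (∑' k, F k c) c := by
    intro c hc
    have hc' : |c| < 1 / exp 1 := by rw [abs_of_pos hc.1]; exact hc.2
    rw [(hS c hc).tsum_eq]
    have := (((treeFun_hasDerivAt hc').neg.add (hasDerivAt_id c)).exp).neg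
    convert! this using 1
    simp
    ring
  have hgc : ContinuousOn g (Set.Icc 0 (1 / exp 1)) := by
    have := treeFun_cont
    simp only [g]
    fun_prop
  have hint : IntervalIntegrable (fun c => ∑' k, F k c) MeasureTheory.volume 0 (1 / exp 1) := by
    refine intervalIntegral.intervalIntegrable_deriv_of_nonneg (g := g) ?_ ?_ ?_
    · rwa [Set.uIcc_of_le hb.le]
    · rwa [min_eq_left hb.le, max_eq_right hb.le]
    · rw [min_eq_left hb.le, max_eq_right hb.le]
      exact fun x hx => tsum_nonneg fun k => hFnn k x hx.1.le
  have hftc := intervalIntegral.integral_eq_sub_of_hasDerivAt_of_le hb.le hgc hder hint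
  have hae : ∀ᵐ t : ℝ, t ∈ Set.uIoc 0 (1 / exp 1) → t ∈ Set.Ioo 0 (1 / exp 1) := by
    have : ∀ᵐ t : ℝ, t ≠ 1 / exp 1 := by
      simp [MeasureTheory.ae_iff]
    filter_upwards [this] with t ht h
    rw [Set.uIoc_of_le hb.le] at h
    exact ⟨h.1, lt_of_le_of_ne h.2 ht⟩
  have hswap : HasSum (fun k => ∫ c in (0 : ℝ)..(1 / exp 1), F k c)
      (∫ c in (0 : ℝ)..(1 / exp 1), ∑' k, F k c) := by
    refine intervalIntegral.hasSum_integral_of_dominated_convergence F ?_ ?_ ?_ hint ?_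
    · intro n
      rw [Set.uIoc_of_le hb.le]
      refine ContinuousOn.aestronglyMeasurable ?_ measurableSet_Ioc
      have := treeFun_cont.mono Set.Ioc_subset_Icc_self
      simp only [F]
      fun_prop
    · intro n
      filter_upwards [hae] with t ht h
      rw [Real.norm_eq_abs, abs_of_nonneg (hFnn n t (ht h).1.le)]
    · filter_upwards [hae] with t ht h
      exact (hS t (ht h)).summable
    · filter_upwards [hae] with t ht h
      exact (hS t (ht h)).summable.hasSum
  have : ∑' k : ℕ, pLen (k + 2) = ∑' k, ∫ c in (0 : ℝ)..(1 / exp 1), F k c := rfl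
  rw [this, hswap.tsum_eq, hftc]
  simp only [g, treeFun_end, treeFun_zero]
  simp
  ring
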